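/- (Lemma 1, torus version.) Given two Borel probability measures μ and ν on Q^d with Fourier–Stieltjes transforms f_μ and f_ν, one has W̃₁(μ,ν)² ≤ Σ_{m ∈ ℤ^d, m ≠ 0} |f_μ(m) − f_ν(m)|² / |m|². -/

import Mathlib

open MeasureTheory Real ENNReal

noncomputable section

/-- The cube `Q^d = (−π, π]^d`. -/
def Qcube (d : ℕ) : Set (Fin d → ℝ) := {x | ∀ i, x i ∈ Set.Ioc (-π) π}

/-- The one-dimensional torus distance on `(−π,π]`. -/
def rhoCircle (s t : ℝ) : ℝ := min |s - t| (2 * π - |s - t|)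

/-- The geodesic distance on the torus `Q^d = (−π,π]^d`. -/
def rhoTorus {d : ℕ} (x y : Fin d → ℝ) : ℝ :=
  Real.sqrt (∑ i, rhoCircle (x i) (y i) ^ 2)

/-- `γ` is a coupling of `μ` and `ν`. -/
def IsCoupling {α : Type*} [MeasurableSpace α]
    (γ : Measure (α × α)) (μ ν : Measure α) : Prop :=
  γ.map Prod.fst = μ ∧ γ.map Prod.snd = ν

/-- Optimal transport cost for a cost function `c`. -/
def transportCost {α : Type*} [MeasurableSpace α] (c : α → α → ℝ)
    (μ ν : Measure α) : ℝ≥0∞ :=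
  ⨅ (γ : Measure (α × α)) (_ : IsCoupling γ μ ν),
    ∫⁻ p, ENNReal.ofReal (c p.1 p.2) ∂γ

/-- Torus Kantorovich distance `W̃₁`. -/
def W1tilde {d : ℕ} (μ ν : Measure (Fin d → ℝ)) : ℝ≥0∞ := transportCost rhoTorus μ ν

/-- Fourier–Stieltjes transform `f_μ(m) = ∫ e^{i⟨m,x⟩} dμ(x)`, `m ∈ ℤ^d`. -/
def fourierStieltjes {d : ℕ} (μ : Measure (Fin d → ℝ)) (m : Fin d → ℤ) : ℂ :=
  ∫ x, Complex.exp (Complex.I * ∑ i, (m i : ℂ) * (x i : ℂ)) ∂μ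


section Kantorovich

set_option linter.unusedSectionVars false

variable {X : Type*} [MetricSpace X] [CompactSpace X] [MeasurableSpace X] [BorelSpace X]

/-- Admissible values in the definition of the sublinear functional. -/
def dualSet (c : C(X × X, ℝ)) (M N : Measure X) (K : ℝ) (f : C(X × X, ℝ)) : Set ℝ :=
  {r | ∃ (φ ψ : C(X, ℝ)) (s : ℝ), 0 < s ∧ (∀ x y, f (x, y) ≤ φ x + ψ y + s * c (x, y)) ∧
    r = ∫ x, φ x ∂M + ∫ x, ψ x ∂N + s * K}

lemma integrable_cont (M : Measure X) [IsFiniteMeasure M] (φ : C(X, ℝ)) :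
    Integrable (fun x => φ x) M :=
  φ.continuous.integrable_of_hasCompactSupport (HasCompactSupport.of_compactSpace _)

lemma dualSet_smul_mem {c : C(X × X, ℝ)} {M N : Measure X} {K : ℝ} {f : C(X × X, ℝ)}
    {a r : ℝ} (ha : 0 < a) (hr : r ∈ dualSet c M N K f) : a * r ∈ dualSet c M N K (a • f) := by
  obtain ⟨φ, ψ, s, hs, h, rfl⟩ := hr
  refine ⟨a • φ, a • ψ, a * s, by positivity, fun x y => ?_, ?_⟩
  · have := mul_le_mul_of_nonneg_left (h x y) ha.le
    simp only [ContinuousMap.smul_apply, smul_eq_mul]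
    linarith
  · simp only [ContinuousMap.smul_apply, smul_eq_mul, integral_const_mul]
    ring

lemma dualSet_add_mem {c : C(X × X, ℝ)} {M N : Measure X} [IsProbabilityMeasure M]
    [IsProbabilityMeasure N] {K : ℝ} {f g : C(X × X, ℝ)}
    {r t : ℝ} (hr : r ∈ dualSet c M N K f) (ht : t ∈ dualSet c M N K g) :
    r + t ∈ dualSet c M N K (f + g) := by
  obtain ⟨φ, ψ, s, hs, h, rfl⟩ := hr
  obtain ⟨φ', ψ', s', hs', h', rfl⟩ := ht
  refine ⟨φ + φ', ψ + ψ', s + s', by positivity, fun x y => ?_, ?_⟩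
  · have := h x y
    have := h' x y
    simp only [ContinuousMap.add_apply]
    linarith
  · simp only [ContinuousMap.add_apply]
    rw [integral_add (integrable_cont M φ) (integrable_cont M φ'),
      integral_add (integrable_cont N ψ) (integrable_cont N ψ')]
    ring

lemma dualSet_nonempty (c : C(X × X, ℝ)) (hc : ∀ p, 0 ≤ c p) (M N : Measure X) (K : ℝ)
    (f : C(X × X, ℝ)) : (dualSet c M N K f).Nonempty := by
  refine ⟨_, ContinuousMap.const X ‖f‖, 0, 1, one_pos, fun x y => ?_, rfl⟩
  have := (le_abs_self _).trans (f.norm_coe_le_norm (x, y))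
  have := hc (x, y)
  simp
  linarith

lemma dualSet_bdd (c : C(X × X, ℝ)) (M N : Measure X) [IsProbabilityMeasure M]
    [IsProbabilityMeasure N] (K : ℝ)
    (hK : ∀ φ ψ : C(X, ℝ), (∀ x y, φ x + ψ y ≤ c (x, y)) → ∫ x, φ x ∂M + ∫ x, ψ x ∂N ≤ K)
    (f : C(X × X, ℝ)) : BddBelow (dualSet c M N K f) := by
  refine ⟨-‖f‖, ?_⟩
  rintro _ ⟨φ, ψ, s, hs, h, rfl⟩
  have := hK ((-s⁻¹) • (φ + ContinuousMap.const X ‖f‖)) ((-s⁻¹) • ψ) (fun x y => by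
    have h1 := h x y
    have h2 : -‖f‖ ≤ f (x, y) := (abs_le.1 (f.norm_coe_le_norm (x, y))).1
    simp only [ContinuousMap.smul_apply, smul_eq_mul, ContinuousMap.add_apply,
      ContinuousMap.const_apply]
    have h3 : s⁻¹ * (-(φ x + ψ y + ‖f‖)) ≤ s⁻¹ * (s * c (x, y)) := by
      apply mul_le_mul_of_nonneg_left _ (by positivity)
      linarith
    rw [inv_mul_cancel_left₀ hs.ne'] at h3
    linarith)
  simp only [ContinuousMap.smul_apply, smul_eq_mul, integral_const_mul, ContinuousMap.add_apply,
      ContinuousMap.const_apply] at this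
  rw [integral_add (integrable_cont M φ) (integrable_const _)] at this
  simp only [integral_const, probReal_univ, one_smul] at this
  have h3 := mul_le_mul_of_nonneg_left this hs.le
  have h4 : s * (-s⁻¹ * (∫ x, φ x ∂M + ‖f‖) + -s⁻¹ * ∫ x, ψ x ∂N)
    = -(∫ x, φ x ∂M + ‖f‖ + ∫ x, ψ x ∂N) := by
    field_simp
    ring
  linarith

theorem kantorovich (c : C(X × X, ℝ)) (hc : ∀ p, 0 ≤ c p) (M N : Measure X)
    [IsProbabilityMeasure M] [IsProbabilityMeasure N] (K : ℝ)
    (hK : ∀ φ ψ : C(X, ℝ), (∀ x y, φ x + ψ y ≤ c (x, y)) → ∫ x, φ x ∂M + ∫ x, ψ x ∂N ≤ K) :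
    ∃ γ : Measure (X × X), IsCoupling γ M N ∧ ∫⁻ p, ENNReal.ofReal (c p) ∂γ ≤ ENNReal.ofReal K := by
  have hne := dualSet_nonempty c hc M N K
  have hbd := dualSet_bdd c M N K hK
  have hom1 : ∀ a : ℝ, 0 < a → ∀ f, sInf (dualSet c M N K (a • f)) ≤ a * sInf (dualSet c M N K f) := by
    intro a ha f
    have : a⁻¹ * sInf (dualSet c M N K (a • f)) ≤ sInf (dualSet c M N K f) := by
      apply le_csInf (hne f)
      intro r hr
      rw [inv_mul_le_iff₀ ha]
      exact csInf_le (hbd _) (dualSet_smul_mem ha hr)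
    rwa [inv_mul_le_iff₀ ha] at this
  obtain ⟨Λ, -, hΛ⟩ := exists_extension_of_le_sublinear (⊥ : C(X × X, ℝ) →ₗ.[ℝ] ℝ)
    (fun f => sInf (dualSet c M N K f))
    (by
      intro a ha f
      apply le_antisymm (hom1 a ha f)
      have := hom1 a⁻¹ (inv_pos.2 ha) (a • f)
      rw [inv_smul_smul₀ ha.ne'] at this
      rwa [← le_inv_mul_iff₀ ha])
    (by
      intro f g
      have : ∀ r ∈ dualSet c M N K f, ∀ t ∈ dualSet c M N K g,
          sInf (dualSet c M N K (f + g)) ≤ r + t :=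
        fun r hr t ht => csInf_le (hbd _) (dualSet_add_mem hr ht)
      have h1 : ∀ r ∈ dualSet c M N K f,
          sInf (dualSet c M N K (f + g)) - r ≤ sInf (dualSet c M N K g) := by
        intro r hr
        apply le_csInf (hne g)
        intro t ht
        linarith [this r hr t ht]
      have h2 : sInf (dualSet c M N K (f + g)) - sInf (dualSet c M N K g)
          ≤ sInf (dualSet c M N K f) := by
        apply le_csInf (hne f)
        intro r hr
        linarith [h1 r hr]
      linarith)
    (by
      rintro ⟨x, hx⟩
      have hx' : x = 0 := (Submodule.mem_bot ℝ).1 hx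
      subst hx'
      have : (⟨0, hx⟩ : (⊥ : C(X × X, ℝ) →ₗ.[ℝ] ℝ).domain) = 0 := rfl
      rw [this, LinearPMap.map_zero]
      have := hom1 2 two_pos 0
      rw [smul_zero] at this
      simp only [ZeroMemClass.coe_zero]
      linarith)
  have key : ∀ f : C(X × X, ℝ), ∀ φ ψ : C(X, ℝ), ∀ s : ℝ, 0 < s →
      (∀ x y, f (x, y) ≤ φ x + ψ y + s * c (x, y)) →
      Λ f ≤ ∫ x, φ x ∂M + ∫ x, ψ x ∂N + s * K := fun f φ ψ s hs h =>
    (hΛ f).trans (csInf_le (hbd _) ⟨φ, ψ, s, hs, h, rfl⟩)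
  have key2 : ∀ f : C(X × X, ℝ), ∀ φ ψ : C(X, ℝ), 
      (∀ x y, f (x, y) ≤ φ x + ψ y) →
      Λ f ≤ ∫ x, φ x ∂M + ∫ x, ψ x ∂N := by
    intro f φ ψ h
    have h1 : ∀ s : ℝ, 0 < s → Λ f ≤ ∫ x, φ x ∂M + ∫ x, ψ x ∂N + s * K := fun s hs =>
      key f φ ψ s hs (fun x y => by
        have := h x y
        have := mul_nonneg hs.le (hc (x, y))
        linarith)
    have h2 : Filter.Tendsto (fun s : ℝ => ∫ x, φ x ∂M + ∫ x, ψ x ∂N + s * K)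
        (nhdsWithin 0 (Set.Ioi 0)) (nhds (∫ x, φ x ∂M + ∫ x, ψ x ∂N + 0 * K)) := by
      apply Filter.Tendsto.mono_left _ nhdsWithin_le_nhds
      exact Continuous.tendsto (by fun_prop) 0
    have := ge_of_tendsto h2 (Filter.eventually_of_mem self_mem_nhdsWithin h1)
    linarith
  have key3 : ∀ φ ψ : C(X, ℝ), Λ (φ.comp ContinuousMap.fst + ψ.comp ContinuousMap.snd)
      = ∫ x, φ x ∂M + ∫ x, ψ x ∂N := by
    intro φ ψ
    apply le_antisymm (key2 _ _ _ (fun x y => by simp))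
    have := key2 (-(φ.comp ContinuousMap.fst + ψ.comp ContinuousMap.snd)) (-φ) (-ψ)
      (fun x y => by simp only [ContinuousMap.neg_apply, ContinuousMap.add_apply, ContinuousMap.comp_apply, ContinuousMap.fst_apply, ContinuousMap.snd_apply]; linarith)
    rw [map_neg] at this
    simp only [ContinuousMap.neg_apply, integral_neg] at this
    linarith
  have hpos : ∀ f : C(X × X, ℝ), (∀ p, 0 ≤ f p) → 0 ≤ Λ f := by
    intro f hf
    have := key2 (-f) 0 0 (fun x y => by simpa using hf (x, y))
    rw [map_neg] at this
    simp at this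
    linarith
  have hcK : Λ c ≤ K := by
    simpa using key c 0 0 1 one_pos (fun x y => by simp)
  let L0 : CompactlySupportedContinuousMap (X × X) ℝ →ₗ[ℝ] ℝ :=
    { toFun := fun f => Λ f.toContinuousMap
      map_add' := fun f g => map_add Λ f.toContinuousMap g.toContinuousMap
      map_smul' := fun a f => map_smul Λ a f.toContinuousMap }
  let L : CompactlySupportedContinuousMap (X × X) ℝ →ₚ[ℝ] ℝ :=
    PositiveLinearMap.mk₀ L0 (fun f hf => hpos f.toContinuousMap (fun p => hf p))
  let γ := RealRMK.rieszMeasure L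
  have hγ : ∀ f : C(X × X, ℝ), ∫ p, f p ∂γ = Λ f := fun f =>
    RealRMK.integral_rieszMeasure L (CompactlySupportedContinuousMap.continuousMapEquiv f)
  have : γ.Regular := by
    dsimp only [γ]
    infer_instance
  have : IsFiniteMeasure γ := inferInstance
  refine ⟨γ, ⟨?_, ?_⟩, ?_⟩
  · have : IsFiniteMeasure (γ.map Prod.fst) := inferInstance
    apply ext_of_forall_integral_eq_of_IsFiniteMeasure
    intro f
    rw [integral_map measurable_fst.aemeasurable f.continuous.aestronglyMeasurable]
    have := key3 f.toContinuousMap 0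
    rw [← hγ] at this
    simpa using this
  · have : IsFiniteMeasure (γ.map Prod.snd) := inferInstance
    apply ext_of_forall_integral_eq_of_IsFiniteMeasure
    intro f
    rw [integral_map measurable_snd.aemeasurable f.continuous.aestronglyMeasurable]
    have := key3 0 f.toContinuousMap
    rw [← hγ] at this
    simpa using this
  · rw [← ofReal_integral_eq_lintegral_ofReal (integrable_cont γ c) (Filter.Eventually.of_forall hc),
      hγ]
    exact ENNReal.ofReal_le_ofReal hcK

theorem kantorovich_rubinstein (c : C(X × X, ℝ)) (hc : ∀ p, 0 ≤ c p) (hc0 : ∀ x, c (x, x) = 0)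
    (hcs : ∀ x y, c (x, y) = c (y, x)) (hct : ∀ x y z, c (x, z) ≤ c (x, y) + c (y, z))
    (M N : Measure X)
    [IsProbabilityMeasure M] [IsProbabilityMeasure N] (K : ℝ)
    (hK : ∀ u : C(X, ℝ), (∀ x y, u x - u y ≤ c (x, y)) → ∫ x, u x ∂M - ∫ x, u x ∂N ≤ K) :
    ∃ γ : Measure (X × X), IsCoupling γ M N ∧ ∫⁻ p, ENNReal.ofReal (c p) ∂γ ≤ ENNReal.ofReal K := by
  apply kantorovich c hc M N K
  intro φ ψ h
  have : Nonempty X := M.nonempty_of_neZero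
  have hb : ∀ x, BddBelow (Set.range fun y => c (x, y) - ψ y) := by
    intro x
    refine ⟨φ x, ?_⟩
    rintro _ ⟨y, rfl⟩
    have := h x y
    simp only
    linarith
  have hlip : ∀ x x', (⨅ y, (c (x, y) - ψ y)) - (⨅ y, (c (x', y) - ψ y)) ≤ c (x, x') := by
    intro x x'
    have : (⨅ y, (c (x, y) - ψ y)) - c (x, x') ≤ ⨅ y, (c (x', y) - ψ y) := by
      apply le_ciInf
      intro y
      have h1 := ciInf_le (hb x) y
      have h2 := hct x x' y
      linarith
    linarith
  have hcont : Continuous (fun x => ⨅ y, (c (x, y) - ψ y)) := by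
    rw [continuous_iff_continuousAt]
    intro x
    rw [ContinuousAt, tendsto_iff_dist_tendsto_zero]
    have h1 : Filter.Tendsto (fun y => c (y, x)) (nhds x) (nhds 0) := by
      rw [← hc0 x]
      exact Continuous.tendsto (f := fun y => c (y, x)) (by fun_prop) x
    refine squeeze_zero (fun _ => dist_nonneg) (fun y => ?_) h1
    rw [Real.dist_eq, abs_le]
    have h2 := hlip x y
    rw [hcs] at h2
    exact ⟨by linarith, hlip y x⟩
  have h0 := hK ⟨_, hcont⟩ hlip
  have h1 : ∫ x, φ x ∂M ≤ ∫ x, (⟨_, hcont⟩ : C(X, ℝ)) x ∂M := by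
    apply integral_mono (integrable_cont M φ) (integrable_cont M _)
    intro x
    apply le_ciInf
    intro y
    linarith [h x y]
  have h2 : ∫ x, ψ x ∂N ≤ ∫ x, - (⟨_, hcont⟩ : C(X, ℝ)) x ∂N := by
    apply integral_mono (integrable_cont N ψ) (integrable_cont N (-_))
    intro x
    have h1 := ciInf_le (hb x) x
    simp only [hc0] at h1
    change ψ x ≤ -(⨅ y, (c (x, y) - ψ y))
    linarith
  rw [integral_neg] at h2
  linarith

end Kantorovich

section Torus

local instance instMS : MeasureSpace UnitAddCircle := ⟨AddCircle.haarAddCircle⟩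

local instance instHaar : Measure.IsAddHaarMeasure (volume : Measure UnitAddCircle) :=
  inferInstanceAs (Measure.IsAddHaarMeasure AddCircle.haarAddCircle)

local instance instProb : IsProbabilityMeasure (volume : Measure UnitAddCircle) :=
  inferInstanceAs (IsProbabilityMeasure AddCircle.haarAddCircle)

open UnitAddTorus

/-- Euclidean length of a real vector. -/
def elen {d : ℕ} (v : Fin d → ℝ) : ℝ := Real.sqrt (∑ i, v i ^ 2)

lemma elen_eq {d : ℕ} (v : Fin d → ℝ) : elen v = ‖(WithLp.toLp 2 v : EuclideanSpace ℝ (Fin d))‖ := by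
  rw [EuclideanSpace.norm_eq]
  simp [elen]

lemma elen_add {d : ℕ} (v w : Fin d → ℝ) : elen (v + w) ≤ elen v + elen w := by
  simp only [elen_eq, WithLp.toLp_add]
  exact norm_add_le _ _

lemma elen_mono {d : ℕ} (v w : Fin d → ℝ) (hv : ∀ i, 0 ≤ v i) (h : ∀ i, v i ≤ w i) :
    elen v ≤ elen w := by
  apply Real.sqrt_le_sqrt
  exact Finset.sum_le_sum fun i _ => pow_le_pow_left₀ (hv i) (h i) 2

lemma elen_nonneg {d : ℕ} (v : Fin d → ℝ) : 0 ≤ elen v := Real.sqrt_nonneg _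

/-- The torus cost on the unit torus. -/
def tc {d : ℕ} : C(UnitAddTorus (Fin d) × UnitAddTorus (Fin d), ℝ) where
  toFun p := 2 * π * elen (fun i => ‖p.1 i - p.2 i‖)
  continuous_toFun := by
    unfold elen
    fun_prop

lemma tc_apply {d : ℕ} (a b : UnitAddTorus (Fin d)) :
    tc (a, b) = 2 * π * elen (fun i => ‖a i - b i‖) := rfl

lemma tc_nonneg {d : ℕ} (p : UnitAddTorus (Fin d) × UnitAddTorus (Fin d)) : 0 ≤ tc p := by
  have := elen_nonneg (fun i => ‖p.1 i - p.2 i‖)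
  have := Real.pi_pos
  change 0 ≤ 2 * π * elen (fun i => ‖p.1 i - p.2 i‖)
  positivity

lemma tc_self {d : ℕ} (a : UnitAddTorus (Fin d)) : tc (a, a) = 0 := by
  simp [tc_apply, elen]

lemma tc_symm {d : ℕ} (a b : UnitAddTorus (Fin d)) : tc (a, b) = tc (b, a) := by
  simp only [tc_apply, norm_sub_rev]

lemma tc_triangle {d : ℕ} (a b c : UnitAddTorus (Fin d)) : tc (a, c) ≤ tc (a, b) + tc (b, c) := by
  simp only [tc_apply]
  rw [← mul_add]
  apply mul_le_mul_of_nonneg_left _ (by have := Real.pi_pos; positivity)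
  refine le_trans ?_ (elen_add _ _)
  apply elen_mono
  · intro i
    positivity
  · intro i
    exact norm_sub_le_norm_sub_add_norm_sub _ _ _

/-- Projection from `ℝ^d` to the unit torus. -/
def tq {d : ℕ} (x : Fin d → ℝ) : UnitAddTorus (Fin d) := fun i => (x i : UnitAddCircle)

lemma tc_tq_le {d : ℕ} (x y : Fin d → ℝ) : tc (tq x, tq y) ≤ 2 * π * elen (x - y) := by
  rw [tc_apply]
  apply mul_le_mul_of_nonneg_left _ (by have := Real.pi_pos; positivity)
  have : elen (x - y) = elen (fun i => |x i - y i|) := by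
    simp [elen]
  rw [this]
  apply elen_mono
  · intro i
    positivity
  · intro i
    simp only [tq]
    rw [← QuotientAddGroup.mk_sub]
    exact UnitAddCircle.norm_eq.trans_le (by
      simpa using round_le (x i - y i) 0)

/-- Gradient bound. -/
lemma grad_bound {d : ℕ} (w : (Fin d → ℝ) → ℝ) (C : ℝ) (_hC : 0 ≤ C)
    (hw : ∀ x y, |w x - w y| ≤ C * elen (x - y)) (x : Fin d → ℝ) (L : (Fin d → ℝ) →L[ℝ] ℝ)
    (hL : HasFDerivAt w L x) : ∑ j, (L (Pi.single j 1)) ^ 2 ≤ C ^ 2 := by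
  have h1 : ∀ v, |L v| ≤ C * elen v := by
    intro v
    have h2 := (hL.hasLineDerivAt v).tendsto_slope_zero
    refine le_of_tendsto h2.abs ?_
    filter_upwards [self_mem_nhdsWithin] with t ht
    have ht : t ≠ 0 := ht
    simp only [smul_eq_mul, abs_mul, abs_inv]
    rw [inv_mul_le_iff₀ (abs_pos.2 ht)]
    refine (hw _ _).trans (le_of_eq ?_)
    have : elen (x + t • v - x) = |t| * elen v := by
      rw [add_sub_cancel_left, elen_eq, elen_eq, WithLp.toLp_smul, norm_smul, Real.norm_eq_abs]
    rw [this]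
    ring
  set g : Fin d → ℝ := fun j => L (Pi.single j 1) with hg
  have h2 : L g = ∑ j, (L (Pi.single j 1)) ^ 2 := by
    conv_lhs => rw [pi_eq_sum_univ' g]
    rw [map_sum]
    apply Finset.sum_congr rfl
    intro j _
    rw [map_smul, smul_eq_mul, sq]
  have h3 := (le_abs_self _).trans (h1 g)
  rw [h2] at h3
  have h4 : elen g ^ 2 = ∑ j, (L (Pi.single j 1)) ^ 2 := by
    rw [elen, Real.sq_sqrt (Finset.sum_nonneg fun i _ => sq_nonneg _)]
  rw [← h4] at h3 ⊢
  have h5 := elen_nonneg g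
  rcases h5.eq_or_lt with h | h
  · rw [← h, zero_pow two_ne_zero]
    positivity
  · have : elen g ≤ C := by
      rw [sq] at h3
      exact le_of_mul_le_mul_right h3 h
    exact pow_le_pow_left₀ h5 this 2

lemma parseval {d : ℕ} (g : C(UnitAddTorus (Fin d), ℂ)) :
    HasSum (fun i ↦ ‖mFourierCoeff g i‖ ^ 2) (∫ t, ‖g t‖ ^ 2) := by
  have := hasSum_sq_mFourierCoeff (g.toLp 2 volume ℂ)
  simp only [mFourierCoeff_toLp] at this
  convert this using 1
  apply integral_congr_ae
  filter_upwards [g.coeFn_toLp (p := 2) (𝕜 := ℂ) volume] with x hx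
  rw [hx]

lemma mFourier_add_arg {d : ℕ} (m : Fin d → ℤ) (x h : UnitAddTorus (Fin d)) :
    mFourier m (x + h) = mFourier m x * mFourier m h := by
  simp only [mFourier, ContinuousMap.coe_mk, ← Finset.prod_mul_distrib]
  apply Finset.prod_congr rfl
  intro i _
  simp [fourier_apply, smul_add, AddCircle.toCircle_add]

lemma coeff_shift {d : ℕ} (U : C(UnitAddTorus (Fin d), ℂ)) (h : UnitAddTorus (Fin d))
    (m : Fin d → ℤ) :
    ∫ x, mFourier (-m) x • U (x + h) = mFourier m h * mFourierCoeff U m := by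
  rw [mFourierCoeff, ← integral_add_right_eq_self (μ := volume) (fun x => mFourier (-m) x • U x) h,
    ← integral_const_mul]
  apply integral_congr_ae
  refine Filter.Eventually.of_forall fun x => ?_
  simp only [mFourier_add_arg, smul_eq_mul]
  have : mFourier m h * mFourier (-m) h = 1 := by
    rw [← mFourier_add, add_neg_cancel, mFourier_zero]
    rfl
  linear_combination (-mFourier (-m) x * U (x + h)) * this

lemma mFourier_tq {d : ℕ} (m : Fin d → ℤ) (x : Fin d → ℝ) :
    mFourier m (tq x) = Complex.exp (2 * π * Complex.I * ∑ i, (m i : ℂ) * (x i : ℂ)) := by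
  simp only [mFourier, ContinuousMap.coe_mk, tq, fourier_coe_apply]
  rw [← Complex.exp_sum, Finset.mul_sum]
  congr 1
  apply Finset.sum_congr rfl
  intro i _
  push_cast
  ring

lemma integrable_contC {X : Type*} [TopologicalSpace X] [CompactSpace X] [MeasurableSpace X]
    [OpensMeasurableSpace X] [SecondCountableTopology X] (M : Measure X) [IsFiniteMeasure M]
    {E : Type*} [NormedAddCommGroup E] {φ : X → E} (hφ : Continuous φ) :
    Integrable φ M :=
  hφ.integrable_of_hasCompactSupport (HasCompactSupport.of_compactSpace _)

/-- complexification -/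
def toC {X : Type*} [TopologicalSpace X] (u : C(X, ℝ)) : C(X, ℂ) :=
  ⟨fun x => (u x : ℂ), by fun_prop⟩

lemma energy_fin {d : ℕ} (u : C(UnitAddTorus (Fin d), ℝ)) (h : UnitAddTorus (Fin d))
    (F : Finset (Fin d → ℤ)) :
    ∑ m ∈ F, ‖mFourier m h - 1‖ ^ 2 * ‖mFourierCoeff (toC u) m‖ ^ 2 ≤
      ∫ x, (u (x + h) - u x) ^ 2 := by
  let g : C(UnitAddTorus (Fin d), ℂ) := ⟨fun x => toC u (x + h) - toC u x, by fun_prop⟩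
  have h1 := parseval g
  have h2 : ∀ m, mFourierCoeff g m = (mFourier m h - 1) * mFourierCoeff (toC u) m := by
    intro m
    have : mFourierCoeff g m = ∫ x, (mFourier (-m) x • toC u (x + h) - mFourier (-m) x • toC u x) := by
      apply integral_congr_ae
      refine Filter.Eventually.of_forall fun x => ?_
      simp only [g, ContinuousMap.coe_mk, smul_sub]
    rw [this, integral_sub (integrable_contC _ (by fun_prop)) (integrable_contC _ (by fun_prop)),
      coeff_shift, sub_mul, one_mul]
    rfl
  have h3 : ∫ x, ‖g x‖ ^ 2 = ∫ x, (u (x + h) - u x) ^ 2 := by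
    apply integral_congr_ae
    refine Filter.Eventually.of_forall fun x => ?_
    simp only [g, toC, ContinuousMap.coe_mk]
    rw [← Complex.ofReal_sub, Complex.norm_real, Real.norm_eq_abs, sq_abs]
  rw [← h3]
  refine le_trans (le_of_eq ?_) (sum_le_hasSum F (fun _ _ => by positivity) h1)
  apply Finset.sum_congr rfl
  intro m _
  rw [h2, norm_mul, mul_pow]

lemma energy_quot {d : ℕ} (u : C(UnitAddTorus (Fin d), ℝ)) (t : ℝ)
    (F : Finset (Fin d → ℤ)) :
    ∑ m ∈ F, (∑ j, ‖((t : ℝ) : ℂ)⁻¹ * (mFourier m (tq (t • Pi.single j 1)) - 1)‖ ^ 2)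
        * ‖mFourierCoeff (toC u) m‖ ^ 2 ≤
      ∫ x in {x : Fin d → ℝ | ∀ i, x i ∈ Set.Ioc (0 : ℝ) (0 + 1)},
        ∑ j, (t⁻¹ * (u (tq (x + t • Pi.single j 1)) - u (tq x))) ^ 2 := by
  have h1 := integral_preimage (fun x : UnitAddTorus (Fin d) =>
    ∑ j, (t⁻¹ * (u (x + tq (t • Pi.single j 1)) - u x)) ^ 2) (fun _ => 0)
  refine le_trans ?_ (le_of_eq h1)
  rw [integral_finsetSum _ (fun j _ => integrable_contC _ (by fun_prop))]
  simp only [Finset.sum_mul]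
  rw [Finset.sum_comm]
  apply Finset.sum_le_sum
  intro j _
  have := mul_le_mul_of_nonneg_left (energy_fin u (tq (t • Pi.single j 1)) F) (sq_nonneg t⁻¹)
  rw [← integral_const_mul, Finset.mul_sum] at this
  refine le_trans (le_of_eq ?_) (this.trans (le_of_eq ?_))
  · apply Finset.sum_congr rfl
    intro m _
    rw [norm_mul, mul_pow, ← Complex.ofReal_inv, Complex.norm_real, Real.norm_eq_abs, sq_abs, mul_assoc]
  · congr 1
    ext x
    ring

lemma energy {d : ℕ} (u : C(UnitAddTorus (Fin d), ℝ)) (hu : ∀ a b, u a - u b ≤ tc (a, b))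
    (F : Finset (Fin d → ℤ)) :
    ∑ m ∈ F, (∑ j, (m j : ℝ) ^ 2) * ‖mFourierCoeff (toC u) m‖ ^ 2 ≤ 1 := by
  set B : Set (Fin d → ℝ) := {x : Fin d → ℝ | ∀ i, x i ∈ Set.Ioc (0 : ℝ) (0 + 1)} with hB
  have hpi := Real.pi_pos
  have hBvol : volume B = 1 := by
    have : B = Set.univ.pi fun _ => Set.Ioc (0 : ℝ) (0 + 1) := by
      ext x
      simp [hB]
    rw [this, Real.volume_pi_Ioc]
    simp
  have hprob : IsProbabilityMeasure (volume.restrict B) := ⟨by simp [hBvol]⟩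
  set w : (Fin d → ℝ) → ℝ := fun x => u (tq x) with hw
  have hwl : ∀ x y, |w x - w y| ≤ 2 * π * elen (x - y) := by
    intro x y
    refine le_trans ?_ (tc_tq_le x y)
    rw [abs_le]
    have h1 := hu (tq y) (tq x)
    rw [tc_symm] at h1
    exact ⟨by simp only [hw]; linarith, hu _ _⟩
  have htq : Continuous (tq (d := d)) := by
    unfold tq
    exact continuous_pi fun i => (AddCircle.continuous_mk' 1).comp (continuous_apply i)
  have hwc : Continuous w := u.continuous.comp htq
  have helen : ∀ v : Fin d → ℝ, elen v ≤ Real.sqrt d * ‖v‖ := by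
    intro v
    rw [elen]
    apply Real.sqrt_le_iff.2
    refine ⟨by positivity, ?_⟩
    rw [mul_pow, Real.sq_sqrt (by positivity)]
    calc ∑ i, v i ^ 2 ≤ ∑ i : Fin d, ‖v‖ ^ 2 := by
          apply Finset.sum_le_sum
          intro i _
          rw [← sq_abs]
          exact pow_le_pow_left₀ (abs_nonneg _) (norm_le_pi_norm v i) 2
      _ = d * ‖v‖ ^ 2 := by simp
  have hlip : LipschitzWith (2 * π * Real.sqrt d).toNNReal w := by
    apply LipschitzWith.of_dist_le_mul
    intro x y
    rw [Real.dist_eq, dist_eq_norm, Real.coe_toNNReal _ (by positivity), mul_assoc (2 * π)]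
    exact (hwl x y).trans (mul_le_mul_of_nonneg_left (helen _) (by positivity))
  have hae : ∀ᵐ x ∂(volume.restrict B), DifferentiableAt ℝ w x :=
    ae_restrict_of_ae hlip.ae_differentiableAt
  set t : ℕ → ℝ := fun n => 1 / ((n : ℝ) + 1) with ht
  have htend : Filter.Tendsto t Filter.atTop (nhdsWithin 0 {0}ᶜ) := by
    rw [tendsto_nhdsWithin_iff]
    refine ⟨tendsto_one_div_add_atTop_nhds_zero_nat, Filter.Eventually.of_forall fun n => ?_⟩
    simp only [ht, Set.mem_compl_iff, Set.mem_singleton_iff]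
    positivity
  have htpos : ∀ n, 0 < t n := fun n => by simp only [ht]; positivity
  have hR : Filter.Tendsto (fun n => ∫ x in B,
      ∑ j, ((t n)⁻¹ * (w (x + t n • Pi.single j 1) - w x)) ^ 2) Filter.atTop
      (nhds (∫ x in B, ∑ j, (fderiv ℝ w x (Pi.single j 1)) ^ 2)) := by
    apply tendsto_integral_of_dominated_convergence (fun _ => ∑ j : Fin d, (2 * π) ^ 2)
    · intro n
      apply Continuous.aestronglyMeasurable
      fun_prop
    · exact integrable_const _
    · intro n
      refine Filter.Eventually.of_forall fun x => ?_
      rw [Real.norm_of_nonneg (by positivity)]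
      apply Finset.sum_le_sum
      intro j _
      rw [← sq_abs]
      apply pow_le_pow_left₀ (abs_nonneg _)
      rw [abs_mul, abs_inv, inv_mul_le_iff₀ (abs_pos.2 (htpos n).ne')]
      refine (hwl _ _).trans (le_of_eq ?_)
      have : elen (x + t n • Pi.single j 1 - x) = |t n| := by
        rw [add_sub_cancel_left, elen_eq, WithLp.toLp_smul, norm_smul, Real.norm_eq_abs,
          ← elen_eq]
        simp [elen, Pi.single_apply]
      rw [this]
      ring
    · filter_upwards [hae] with x hx
      apply tendsto_finsetSum
      intro j _
      apply Filter.Tendsto.pow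
      have := (hx.hasFDerivAt.hasLineDerivAt (Pi.single j 1)).tendsto_slope_zero.comp htend
      simpa [Function.comp_def] using this
  have hRle : ∫ x in B, ∑ j, (fderiv ℝ w x (Pi.single j 1)) ^ 2 ≤ (2 * π) ^ 2 := by
    have : ∫ x in B, (2 * π) ^ 2 = (2 * π) ^ 2 := by simp
    rw [← this]
    apply integral_mono_of_nonneg
    · exact Filter.Eventually.of_forall fun x => Finset.sum_nonneg fun _ _ => sq_nonneg _
    · exact integrable_const _
    · filter_upwards [hae] with x hx
      exact grad_bound w _ (by positivity) hwl x _ hx.hasFDerivAt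
  have hLlim : Filter.Tendsto (fun n => ∑ m ∈ F,
      (∑ j, ‖((t n : ℝ) : ℂ)⁻¹ * (mFourier m (tq (t n • Pi.single j 1)) - 1)‖ ^ 2)
        * ‖mFourierCoeff (toC u) m‖ ^ 2) Filter.atTop
      (nhds (∑ m ∈ F, (∑ j, ‖(2 * π * Complex.I * m j : ℂ)‖ ^ 2)
        * ‖mFourierCoeff (toC u) m‖ ^ 2)) := by
    apply tendsto_finsetSum
    intro m _
    apply Filter.Tendsto.mul_const
    apply tendsto_finsetSum
    intro j _
    apply Filter.Tendsto.pow
    apply Filter.Tendsto.norm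
    have hd : HasDerivAt (fun s : ℝ => Complex.exp (2 * π * Complex.I * m j * s))
        (2 * π * Complex.I * m j) 0 := by
      have h1 : HasDerivAt (fun s : ℝ => (2 * π * Complex.I * m j * s : ℂ))
        (2 * π * Complex.I * m j) 0 := by
        simpa using (Complex.ofRealCLM.hasDerivAt (x := (0 : ℝ))).const_mul (2 * π * Complex.I * m j : ℂ)
      simpa using h1.cexp
    have := hd.tendsto_slope_zero.comp htend
    refine this.congr fun n => ?_
    simp only [Function.comp_def, zero_add, mFourier_tq]
    rw [Complex.real_smul]
    congr 2
    · push_cast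
      rfl
    · congr 1
      rw [Finset.sum_eq_single j]
      · simp
        ring
      · intro i _ hij
        simp [hij]
      · simp
    · simp
  have hfin := le_of_tendsto_of_tendsto' hLlim hR (fun n => energy_quot u (t n) F)
  have h5 : ∑ m ∈ F, (∑ j, ‖(2 * π * Complex.I * m j : ℂ)‖ ^ 2)
        * ‖mFourierCoeff (toC u) m‖ ^ 2 = (2 * π) ^ 2 *
      ∑ m ∈ F, (∑ j, (m j : ℝ) ^ 2) * ‖mFourierCoeff (toC u) m‖ ^ 2 := by
    rw [Finset.mul_sum]
    apply Finset.sum_congr rfl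
    intro m _
    rw [← mul_assoc, Finset.mul_sum]
    congr 1
    apply Finset.sum_congr rfl
    intro j _
    simp only [norm_mul, Complex.norm_I, Complex.norm_intCast, Complex.norm_real, Complex.norm_ofNat,
      Real.norm_eq_abs, mul_one, mul_pow, sq_abs]
  rw [h5] at hfin
  have h6 := hfin.trans hRle
  have h7 : (0 : ℝ) < (2 * π) ^ 2 := by positivity
  exact le_of_mul_le_mul_left (by linarith) h7

lemma mFourier_norm_apply {d : ℕ} (m : Fin d → ℤ) (x : UnitAddTorus (Fin d)) :
    ‖mFourier m x‖ = 1 := by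
  simp only [mFourier, fourier_apply, ContinuousMap.coe_mk, norm_prod, Circle.norm_coe,
    Finset.prod_const_one]

lemma smoothing {d : ℕ} (u : C(UnitAddTorus (Fin d), ℝ)) (ε : ℝ) (hε : 0 < ε) :
    ∃ V : C(UnitAddTorus (Fin d), ℂ), (∀ x, ‖V x - u x‖ ≤ ε) ∧
      Summable (mFourierCoeff V) ∧ ∀ m, ‖mFourierCoeff V m‖ ≤ ‖mFourierCoeff (toC u) m‖ := by
  obtain ⟨δ, hδ, hu⟩ := Metric.uniformContinuous_iff.1
    (CompactSpace.uniformContinuous_of_continuous u.continuous) ε hε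
  set B : Set (UnitAddTorus (Fin d)) := Metric.ball 0 δ with hB
  have hBm : MeasurableSet B := Metric.isOpen_ball.measurableSet
  have hB0 : volume B ≠ 0 := (Metric.isOpen_ball.measure_pos volume ⟨0, Metric.mem_ball_self hδ⟩).ne'
  set P : Measure (UnitAddTorus (Fin d)) := ProbabilityTheory.cond volume B with hP
  have hPp : IsProbabilityMeasure P := ProbabilityTheory.cond_isProbabilityMeasure hB0
  set U := toC u with hU
  have hVc : Continuous fun x => ∫ y, U (x + y) ∂P := by
    apply continuous_of_dominated (bound := fun _ => ‖U‖)
    · intro x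
      exact (by fun_prop : Continuous fun y => U (x + y)).aestronglyMeasurable
    · intro x
      exact Filter.Eventually.of_forall fun y => U.norm_coe_le_norm _
    · exact integrable_const _
    · exact Filter.Eventually.of_forall fun y => by fun_prop
  let V : C(UnitAddTorus (Fin d), ℂ) := ⟨_, hVc⟩
  have hcoef : ∀ m, mFourierCoeff V m = (∫ y, mFourier m y ∂P) * mFourierCoeff U m := by
    intro m
    have h1 : mFourierCoeff V m = ∫ x, ∫ y, mFourier (-m) x • U (x + y) ∂P := by
      apply integral_congr_ae
      refine Filter.Eventually.of_forall fun x => ?_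
      simp only [V, ContinuousMap.coe_mk]
      rw [integral_smul]
    rw [h1, integral_integral_swap]
    · simp only [coeff_shift]
      rw [integral_mul_const]
    · exact integrable_contC _ (by unfold Function.uncurry; fun_prop)
  have hple : ∀ m, ‖∫ y, mFourier m y ∂P‖ ≤ 1 := by
    intro m
    refine (norm_integral_le_integral_norm _).trans ?_
    simp [mFourier_norm_apply]
  refine ⟨V, ?_, ?_, ?_⟩
  · intro x
    have h1 : V x - u x = ∫ y, (U (x + y) - U x) ∂P := by
      rw [integral_sub (integrable_contC _ (by fun_prop)) (integrable_const _)]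
      simp [V, hU, toC]
    rw [h1]
    have : ∀ᵐ y ∂P, ‖U (x + y) - U x‖ ≤ ε := by
      have hmem : ∀ᵐ y ∂P, y ∈ B := ProbabilityTheory.ae_cond_mem hBm
      filter_upwards [hmem] with y hy
      have h2 := hu (a := x + y) (b := x) (by
        rw [dist_eq_norm, add_sub_cancel_left]
        simpa [hB] using hy)
      simp only [hU, toC, ContinuousMap.coe_mk]
      rw [← Complex.ofReal_sub, Complex.norm_real]
      rw [Real.dist_eq] at h2
      exact h2.le
    simpa using norm_integral_le_of_norm_le_const this
  · have hsU := (parseval U).summable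
    let I := indicatorConstLp 2 hBm (measure_ne_top volume B) (1 : ℂ)
    have hsI := (hasSum_sq_mFourierCoeff I).summable
    have hpI : ∀ m, ∫ y, mFourier m y ∂P = (((volume B)⁻¹).toReal : ℂ) * mFourierCoeff I (-m) := by
      intro m
      rw [hP, ProbabilityTheory.cond, integral_smul_measure, ← integral_indicator hBm, mFourierCoeff,
        Complex.real_smul]
      congr 1
      apply integral_congr_ae
      have := indicatorConstLp_coeFn (p := 2) (hs := hBm) (hμs := measure_ne_top volume B) (c := (1 : ℂ))
      filter_upwards [this] with x hx
      rw [hx]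
      by_cases hxB : x ∈ B <;> simp [hxB]
    have hsp : Summable fun m => ‖∫ y, mFourier m y ∂P‖ ^ 2 := by
      have h1 := ((Equiv.neg (Fin d → ℤ)).summable_iff.2 hsI).mul_left ((((volume B)⁻¹).toReal) ^ 2)
      refine h1.congr fun m => ?_
      rw [hpI, norm_mul, mul_pow, Complex.norm_real, Real.norm_eq_abs, sq_abs]
      rfl
    apply Summable.of_norm
    refine Summable.of_nonneg_of_le (fun _ => norm_nonneg _) (fun m => ?_) (hsp.add hsU)
    rw [hcoef, norm_mul]
    nlinarith [sq_nonneg (‖∫ y, mFourier m y ∂P‖ - ‖mFourierCoeff U m‖),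
      sq_nonneg (‖∫ y, mFourier m y ∂P‖), sq_nonneg ‖mFourierCoeff U m‖]
  · intro m
    rw [hcoef, norm_mul]
    exact mul_le_of_le_one_left (norm_nonneg _) (hple m)

lemma dual_bound {d : ℕ} (M N : Measure (UnitAddTorus (Fin d))) [IsProbabilityMeasure M]
    [IsProbabilityMeasure N] (S : ℝ)
    (hS : ∀ F : Finset (Fin d → ℤ), ∑ m ∈ F,
      ‖∫ x, mFourier m x ∂M - ∫ x, mFourier m x ∂N‖ ^ 2 / ∑ i, (m i : ℝ) ^ 2 ≤ S)
    (u : C(UnitAddTorus (Fin d), ℝ)) (hu : ∀ a b, u a - u b ≤ tc (a, b)) :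
    ∫ x, u x ∂M - ∫ x, u x ∂N ≤ Real.sqrt S := by
  apply _root_.le_of_forall_pos_le_add
  intro ε hε
  obtain ⟨V, hV, hsum, hle⟩ := smoothing u (ε / 2) (half_pos hε)
  have hint : ∀ M : Measure (UnitAddTorus (Fin d)), IsProbabilityMeasure M →
      HasSum (fun m => mFourierCoeff V m * ∫ x, mFourier m x ∂M) (∫ x, V x ∂M) := by
    intro M _
    have h1 := hasSum_integral_of_summable_integral_norm (μ := M)
      (F := fun m x => mFourierCoeff V m * mFourier m x)
      (fun m => integrable_contC _ (by fun_prop))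
      (by simpa [norm_mul, mFourier_norm_apply] using hsum.norm)
    simp only [integral_const_mul] at h1
    have h2 : ∫ x, V x ∂M = ∫ x, ∑' m, mFourierCoeff V m * mFourier m x ∂M := by
      apply integral_congr_ae
      refine Filter.Eventually.of_forall fun x => ?_
      exact (hasSum_mFourier_series_apply_of_summable hsum x).tsum_eq.symm
    rw [h2]
    exact h1
  have hd := (hint M inferInstance).sub (hint N inferInstance)
  simp only [← mul_sub] at hd
  have hbound : ‖∫ x, V x ∂M - ∫ x, V x ∂N‖ ≤ Real.sqrt S := by
    refine le_of_tendsto hd.norm (Filter.Eventually.of_forall fun F => ?_)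
    refine (norm_sum_le _ _).trans ?_
    apply Real.le_sqrt_of_sq_le
    set D : (Fin d → ℤ) → ℂ := fun m => ∫ x, mFourier m x ∂M - ∫ x, mFourier m x ∂N with hD
    set nm : (Fin d → ℤ) → ℝ := fun m => Real.sqrt (∑ i, (m i : ℝ) ^ 2) with hnm
    have hnm2 : ∀ m, nm m ^ 2 = ∑ i, (m i : ℝ) ^ 2 := fun m =>
      Real.sq_sqrt (Finset.sum_nonneg fun i _ => sq_nonneg _)
    have h1 : ∑ m ∈ F, ‖mFourierCoeff V m * D m‖ ≤
        ∑ m ∈ F, (nm m * ‖mFourierCoeff (toC u) m‖) * (‖D m‖ / nm m) := by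
      apply Finset.sum_le_sum
      intro m _
      rw [norm_mul]
      by_cases h0 : nm m = 0
      · have hm : m = 0 := by
          have h2 := hnm2 m
          rw [h0, zero_pow two_ne_zero, eq_comm,
            Finset.sum_eq_zero_iff_of_nonneg (fun i _ => sq_nonneg _)] at h2
          ext i
          simpa using h2 i (Finset.mem_univ i)
        have : D m = 0 := by
          simp [hD, hm, mFourier_zero]
        rw [this]
        simp
      · have : nm m * ‖mFourierCoeff (toC u) m‖ * (‖D m‖ / nm m) =
          ‖mFourierCoeff (toC u) m‖ * ‖D m‖ := by
          field_simp
        rw [this]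
        exact mul_le_mul_of_nonneg_right (hle m) (norm_nonneg _)
    have h2 := Finset.sum_mul_sq_le_sq_mul_sq F (fun m => nm m * ‖mFourierCoeff (toC u) m‖)
      (fun m => ‖D m‖ / nm m)
    simp only [mul_pow, div_pow, hnm2] at h2
    calc (∑ m ∈ F, ‖mFourierCoeff V m * D m‖) ^ 2
        ≤ (∑ m ∈ F, (nm m * ‖mFourierCoeff (toC u) m‖) * (‖D m‖ / nm m)) ^ 2 :=
          pow_le_pow_left₀ (Finset.sum_nonneg fun _ _ => norm_nonneg _) h1 2
      _ ≤ _ := h2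
      _ ≤ 1 * S := by
          apply mul_le_mul (energy u hu F) (hS F) _ zero_le_one
          exact Finset.sum_nonneg fun _ _ => by positivity
      _ = S := one_mul S
  have happ : ∀ M : Measure (UnitAddTorus (Fin d)), IsProbabilityMeasure M →
      ‖∫ x, V x ∂M - (∫ x, u x ∂M : ℝ)‖ ≤ ε / 2 := by
    intro M _
    rw [← integral_complex_ofReal, ← integral_sub (integrable_contC _ (by fun_prop))
      (integrable_contC _ (by fun_prop))]
    simpa using norm_integral_le_of_norm_le_const (μ := M) (Filter.Eventually.of_forall hV)
  have a1 := happ M inferInstance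
  have a2 := happ N inferInstance
  have a3 : ((∫ x, u x ∂M - ∫ x, u x ∂N : ℝ) : ℂ) = (∫ x, V x ∂M - ∫ x, V x ∂N)
      - (∫ x, V x ∂M - (∫ x, u x ∂M : ℝ)) + (∫ x, V x ∂N - (∫ x, u x ∂N : ℝ)) := by
    push_cast
    ring
  have a4 : |∫ x, u x ∂M - ∫ x, u x ∂N| ≤ Real.sqrt S + ε / 2 + ε / 2 := by
    rw [← Real.norm_eq_abs, ← Complex.norm_real, a3]
    refine (norm_add_le _ _).trans (add_le_add ((norm_sub_le _ _).trans (add_le_add hbound a1)) a2)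
  have := le_abs_self (∫ x, u x ∂M - ∫ x, u x ∂N)
  linarith

/-- Rescaled projection. -/
def pq {d : ℕ} (x : Fin d → ℝ) : UnitAddTorus (Fin d) := tq (fun i => x i / (2 * π))

/-- Section of the rescaled projection, with values in the cube. -/
def sec {d : ℕ} (a : UnitAddTorus (Fin d)) : Fin d → ℝ :=
  fun i => 2 * π * (AddCircle.equivIoc 1 (-(1 / 2) : ℝ) (a i) : ℝ)

lemma measurable_pq {d : ℕ} : Measurable (pq (d := d)) := by
  unfold pq tq
  exact measurable_pi_lambda _ fun i => AddCircle.measurable_mk'.comp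
    ((measurable_pi_apply i).div_const _)

lemma measurable_sec {d : ℕ} : Measurable (sec (d := d)) := by
  unfold sec
  refine measurable_pi_lambda _ fun i => Measurable.const_mul ?_ _
  exact measurable_subtype_coe.comp
    ((AddCircle.measurableEquivIoc 1 (-(1 / 2) : ℝ)).measurable.comp (measurable_pi_apply i))

lemma sec_pq {d : ℕ} (x : Fin d → ℝ) (hx : x ∈ Qcube d) : sec (pq x) = x := by
  have hpi := Real.pi_pos
  ext i
  have hi : x i ∈ Set.Ioc (-π) π := hx i
  have h1 : x i / (2 * π) ∈ Set.Ioc (-(1 / 2) : ℝ) (-(1 / 2) + 1) := by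
    constructor
    · rw [lt_div_iff₀ (by positivity)]
      linarith [hi.1]
    · rw [div_le_iff₀ (by positivity)]
      linarith [hi.2]
  have h2 : (AddCircle.equivIoc 1 (-(1 / 2) : ℝ) ((x i / (2 * π) : ℝ) : UnitAddCircle) : ℝ)
      = x i / (2 * π) := by
    rw [AddCircle.equivIoc_coe_of_mem h1]
  simp only [sec, pq, tq]
  rw [h2]
  field_simp

lemma rho_sec {d : ℕ} (a b : UnitAddTorus (Fin d)) : rhoTorus (sec a) (sec b) ≤ tc (a, b) := by
  have hpi := Real.pi_pos
  have key : ∀ i, 0 ≤ rhoCircle (sec a i) (sec b i) ∧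
      rhoCircle (sec a i) (sec b i) ≤ 2 * π * ‖a i - b i‖ := by
    intro i
    set s := AddCircle.equivIoc 1 (-(1 / 2) : ℝ) (a i) with hs
    set t := AddCircle.equivIoc 1 (-(1 / 2) : ℝ) (b i) with ht
    have ha : a i = ((s : ℝ) : UnitAddCircle) :=
      ((AddCircle.equivIoc 1 (-(1 / 2) : ℝ)).symm_apply_apply (a i)).symm
    have hb : b i = ((t : ℝ) : UnitAddCircle) :=
      ((AddCircle.equivIoc 1 (-(1 / 2) : ℝ)).symm_apply_apply (b i)).symm
    have hn : ‖a i - b i‖ = |((s : ℝ) - t) - round ((s : ℝ) - t)| := by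
      rw [ha, hb, ← QuotientAddGroup.mk_sub]
      exact UnitAddCircle.norm_eq
    have hs' := s.2
    have ht' := t.2
    simp only [Set.mem_Ioc] at hs' ht'
    have hz : |(s : ℝ) - t| < 1 := by
      rw [abs_lt]
      constructor <;> linarith [hs'.1, hs'.2, ht'.1, ht'.2]
    have he : |sec a i - sec b i| = 2 * π * |(s : ℝ) - t| := by
      have : sec a i - sec b i = 2 * π * ((s : ℝ) - t) := by
        simp only [sec, ← hs, ← ht]
        ring
      rw [this, abs_mul, abs_of_pos (by positivity : 0 < 2 * π)]
    rw [hn, rhoCircle, he]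
    generalize (s : ℝ) - t = z at *
    generalize round z = n
    constructor
    · apply le_min
      · positivity
      · nlinarith
    · by_cases h0 : n = 0
      · subst h0
        apply (min_le_left _ _).trans
        simp
      · apply (min_le_right _ _).trans
        have h1 : (1 : ℝ) ≤ |(n : ℝ)| := by
          rw [← Int.cast_abs]
          exact_mod_cast Int.one_le_abs h0
        have h2 : |(n : ℝ)| ≤ |z - n| + |z| := by
          have := abs_sub_abs_le_abs_sub (n : ℝ) z
          rw [abs_sub_comm] at this
          linarith
        nlinarith
  rw [tc_apply]
  have h1 : rhoTorus (sec a) (sec b) = elen (fun i => rhoCircle (sec a i) (sec b i)) := rfl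
  have h2 : 2 * π * elen (fun i => ‖a i - b i‖) = elen (fun i => 2 * π * ‖a i - b i‖) := by
    have : (fun i => 2 * π * ‖a i - b i‖) = (2 * π) • (fun i => ‖a i - b i‖) := rfl
    rw [this, elen_eq, elen_eq, WithLp.toLp_smul, norm_smul,
      Real.norm_of_nonneg (by positivity : 0 ≤ 2 * π)]
  rw [h1, h2]
  exact elen_mono _ _ (fun i => (key i).1) (fun i => (key i).2)

lemma fs_eq {d : ℕ} (μ : Measure (Fin d → ℝ)) (m : Fin d → ℤ) :
    ∫ x, mFourier m x ∂(μ.map pq) = fourierStieltjes μ m := by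
  rw [integral_map measurable_pq.aemeasurable (mFourier m).continuous.aestronglyMeasurable]
  apply integral_congr_ae
  refine Filter.Eventually.of_forall fun x => ?_
  simp only [pq, mFourier_tq]
  congr 1
  rw [Finset.mul_sum, Finset.mul_sum]
  apply Finset.sum_congr rfl
  intro i _
  have : (π : ℂ) ≠ 0 := by exact_mod_cast Real.pi_pos.ne'
  push_cast
  field_simp

lemma map_sec_pq {d : ℕ} (μ : Measure (Fin d → ℝ)) (hμ : μ (Qcube d)ᶜ = 0) :
    (μ.map pq).map sec = μ := by
  rw [Measure.map_map measurable_sec measurable_pq]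
  have : sec ∘ pq =ᵐ[μ] id := by
    have h : ∀ᵐ x ∂μ, x ∈ Qcube d := hμ
    filter_upwards [h] with x hx
    exact sec_pq x hx
  rw [Measure.map_congr this, Measure.map_id]

lemma W1_le {d : ℕ} (μ ν : Measure (Fin d → ℝ)) [IsProbabilityMeasure μ] [IsProbabilityMeasure ν]
    (hμ : μ (Qcube d)ᶜ = 0) (hν : ν (Qcube d)ᶜ = 0) (S : ℝ)
    (hS : ∀ F : Finset (Fin d → ℤ), ∑ m ∈ F,
      ‖fourierStieltjes μ m - fourierStieltjes ν m‖ ^ 2 / ∑ i, (m i : ℝ) ^ 2 ≤ S) :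
    W1tilde μ ν ≤ ENNReal.ofReal (Real.sqrt S) := by
  have : IsProbabilityMeasure (μ.map pq) := Measure.isProbabilityMeasure_map measurable_pq.aemeasurable
  have : IsProbabilityMeasure (ν.map pq) := Measure.isProbabilityMeasure_map measurable_pq.aemeasurable
  obtain ⟨γ, ⟨h1, h2⟩, h3⟩ := kantorovich_rubinstein (tc (d := d)) tc_nonneg tc_self tc_symm tc_triangle
    (μ.map pq) (ν.map pq) (Real.sqrt S) (dual_bound _ _ S (by simpa only [fs_eq] using hS))
  have hm : Measurable (Prod.map (sec (d := d)) (sec (d := d))) := measurable_sec.prodMap measurable_sec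
  have hrho : Measurable fun p : (Fin d → ℝ) × (Fin d → ℝ) => ENNReal.ofReal (rhoTorus p.1 p.2) := by
    apply ENNReal.measurable_ofReal.comp
    apply Continuous.measurable
    unfold rhoTorus rhoCircle
    fun_prop
  have hcoup : IsCoupling (γ.map (Prod.map sec sec)) μ ν := by
    refine ⟨?_, ?_⟩
    · rw [Measure.map_map measurable_fst hm]
      have : Prod.fst ∘ Prod.map (sec (d := d)) (sec (d := d)) = sec ∘ Prod.fst := rfl
      rw [this, ← Measure.map_map measurable_sec measurable_fst, h1, map_sec_pq μ hμ]
    · rw [Measure.map_map measurable_snd hm]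
      have : Prod.snd ∘ Prod.map (sec (d := d)) (sec (d := d)) = sec ∘ Prod.snd := rfl
      rw [this, ← Measure.map_map measurable_sec measurable_snd, h2, map_sec_pq ν hν]
  refine (iInf₂_le (γ.map (Prod.map sec sec)) hcoup).trans ?_
  · rw [lintegral_map hrho hm]
    refine le_trans (lintegral_mono fun p => ?_) h3
    exact ENNReal.ofReal_le_ofReal (rho_sec p.1 p.2)

end Torus

/-- Lemma 1 (torus version): `W̃₁(μ,ν)² ≤ Σ_{m ≠ 0} |f_μ(m) − f_ν(m)|² / |m|²`. -/
theorem W1tilde_sq_le_fourier_sum {d : ℕ}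
    (μ ν : Measure (Fin d → ℝ)) [IsProbabilityMeasure μ] [IsProbabilityMeasure ν]
    (hμ : μ (Qcube d)ᶜ = 0) (hν : ν (Qcube d)ᶜ = 0) :
    W1tilde μ ν ^ 2 ≤
      ∑' m : {m : Fin d → ℤ // m ≠ 0},
        ENNReal.ofReal
          (‖fourierStieltjes μ m - fourierStieltjes ν m‖ ^ 2 / ∑ i, ((m.1 i : ℝ)) ^ 2) := by
  set T := ∑' m : {m : Fin d → ℤ // m ≠ 0},
        ENNReal.ofReal
          (‖fourierStieltjes μ m - fourierStieltjes ν m‖ ^ 2 / ∑ i, ((m.1 i : ℝ)) ^ 2) with hT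
  by_cases htop : T = ⊤
  · rw [htop]
    exact le_top
  have hnn : ∀ m : Fin d → ℤ,
      0 ≤ ‖fourierStieltjes μ m - fourierStieltjes ν m‖ ^ 2 / ∑ i, (m i : ℝ) ^ 2 :=
    fun m => by positivity
  have hS : ∀ F : Finset (Fin d → ℤ), ∑ m ∈ F,
      ‖fourierStieltjes μ m - fourierStieltjes ν m‖ ^ 2 / ∑ i, (m i : ℝ) ^ 2 ≤ T.toReal := by
    intro F
    rw [← ENNReal.ofReal_le_iff_le_toReal htop, ENNReal.ofReal_sum_of_nonneg fun m _ => hnn m]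
    refine (ENNReal.sum_le_tsum F).trans (le_of_eq ?_)
    rw [hT]
    symm
    refine tsum_subtype_eq_of_support_subset (s := {m : Fin d → ℤ | m ≠ 0})
      (f := fun m : Fin d → ℤ => ENNReal.ofReal
        (‖fourierStieltjes μ m - fourierStieltjes ν m‖ ^ 2 / ∑ i, (m i : ℝ) ^ 2)) ?_
    intro m hm h0
    apply hm
    subst h0
    simp
  have h1 := W1_le μ ν hμ hν T.toReal hS
  calc W1tilde μ ν ^ 2 ≤ ENNReal.ofReal (Real.sqrt T.toReal) ^ 2 := by gcongr
    _ = T := by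
      rw [← ENNReal.ofReal_pow (Real.sqrt_nonneg _), Real.sq_sqrt ENNReal.toReal_nonneg,
        ENNReal.ofReal_toReal htop]
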